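/- arXiv:1209.4209 — 3 statements merged into one kernel-verified Lean document; each statement's English description precedes it below -/
import Mathlib

section
/- Let n ≤ q be positive integers, let μ be the probability measure on n×q real matrices under which all entries are i.i.d. standard Gaussian N(0,1), and let R be a q×q real symmetric positive semidefinite matrix all of whose eigenvalues are at least σ for some σ > 0. Then ∫ log det(I_n + X R Xᵀ) dμ(X) ≥ n · log(1 + σ · exp((1/n) · Σ_{j=0}^{n-1} (ψ((q−j)/2) + log 2))), where ψ denotes the digamma function ψ(a) = deriv (log ∘ Γ) a on positive reals. -/
open MeasureTheory ProbabilityTheory Matrix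

/-!
Since `R ≥ σ I` and the determinant is monotone for the Loewner order, `R` may be replaced by `σ I`.
Writing `W = X Xᵀ`, the convexity of `φ u = log (1 + σ eᵘ)` gives, by Jensen's inequality over the
logarithms of the eigenvalues of `W`, `log det (I + σ W) ≥ n φ ((1 / n) log det W)`, and a second
use of Jensen's inequality moves the expectation inside `φ`.

It remains to compute `E log det W`. As `W` is the Gram matrix of the rows of `X`, its determinant
is multiplied, each time a row is added, by the squared distance from the new row to the span of the
`j` earlier ones, which has a chi-squared law with `q - j` degrees of freedom. The expected
logarithm of a gamma variable is the derivative at `0` of the cumulant generating function of its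
logarithm, whence the digamma function.
-/

local notation "ψ" => deriv (Real.log ∘ Real.Gamma)

section GammaDistribution

open Set Filter Topology

variable {a r : ℝ}

theorem gammaMeasure_eq_withDensity_restrict (a r : ℝ) :
    gammaMeasure a r = (volume.restrict (Ioi 0)).withDensity fun x ↦
      ENNReal.ofReal (r ^ a / Real.Gamma a * x ^ (a - 1) * Real.exp (-(r * x))) := by
  rw [gammaMeasure, ← withDensity_indicator measurableSet_Ioi]
  refine withDensity_congr_ae ?_
  filter_upwards [Measure.ae_ne volume 0] with x hx
  rcases hx.lt_or_gt with h | h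
  · simp [gammaPDF_of_neg h, h.le]
  · simp [gammaPDF_of_nonneg h.le, h]

theorem ae_pos_gammaMeasure (a r : ℝ) : ∀ᵐ x ∂gammaMeasure a r, 0 < x := by
  rw [gammaMeasure_eq_withDensity_restrict]
  exact withDensity_absolutelyContinuous _ _ (ae_restrict_mem measurableSet_Ioi)

theorem integral_gammaMeasure (ha : 0 < a) (hr : 0 < r) (f : ℝ → ℝ) :
    ∫ x, f x ∂gammaMeasure a r =
      r ^ a / Real.Gamma a * ∫ x in Ioi 0, x ^ (a - 1) * Real.exp (-(r * x)) * f x := by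
  rw [gammaMeasure_eq_withDensity_restrict,
    integral_withDensity_eq_integral_toReal_smul (by fun_prop) (by simp), ← integral_const_mul]
  refine setIntegral_congr_fun measurableSet_Ioi fun x (hx : 0 < x) ↦ ?_
  have := Real.Gamma_pos_of_pos ha
  rw [ENNReal.toReal_ofReal (by positivity), smul_eq_mul]
  ring

theorem mgf_id_gammaMeasure (ha : 0 < a) (hr : 0 < r) {t : ℝ} (ht : t < r) :
    mgf id (gammaMeasure a r) t = (r / (r - t)) ^ a := by
  have hΓ := (Real.Gamma_pos_of_pos ha).ne'
  have hexp (x : ℝ) : x ^ (a - 1) * Real.exp (-(r * x)) * Real.exp (t * x) =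
      x ^ (a - 1) * Real.exp (-((r - t) * x)) := by
    rw [mul_assoc, ← Real.exp_add]
    ring_nf
  simp only [mgf, id_eq, integral_gammaMeasure ha hr, hexp]
  rw [Real.integral_rpow_mul_exp_neg_mul_Ioi ha (sub_pos.2 ht), div_eq_mul_one_div r (r - t),
    Real.mul_rpow hr.le (one_div_pos.2 (sub_pos.2 ht)).le]
  field_simp

theorem mgf_id_gammaMeasure_of_le (ha : 0 < a) (hr : 0 < r) {t : ℝ} (ht : r ≤ t) :
    mgf id (gammaMeasure a r) t = 0 := by
  simp only [mgf, id_eq, integral_gammaMeasure ha hr]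
  refine mul_eq_zero_of_right _ (integral_undef fun h ↦ not_integrableOn_Ioi_rpow (a - 1) ?_)
  refine h.mono' (by fun_prop) ((ae_restrict_iff' measurableSet_Ioi).2 (ae_of_all _ ?_))
  intro x (hx : 0 < x)
  rw [Real.norm_of_nonneg (by positivity), mul_assoc, ← Real.exp_add]
  exact le_mul_of_one_le_right (by positivity) (Real.one_le_exp (by nlinarith))

/- The moments of the gamma distribution are the moment generating function of its logarithm, so
that differentiating them at `0` gives the expectation of the logarithm. -/
theorem mgf_log_gammaMeasure (ha : 0 < a) (hr : 0 < r) {t : ℝ} (ht : 0 < a + t) :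
    mgf Real.log (gammaMeasure a r) t = Real.Gamma (a + t) / Real.Gamma a * r ^ (-t) := by
  have hpow : ∀ x ∈ Ioi (0 : ℝ), x ^ (a - 1) * Real.exp (-(r * x)) * Real.exp (t * Real.log x) =
      x ^ (a + t - 1) * Real.exp (-(r * x)) := by
    intro x (hx : 0 < x)
    rw [mul_comm t, ← Real.rpow_def_of_pos hx, mul_right_comm, ← Real.rpow_add hx]
    ring_nf
  rw [mgf, integral_gammaMeasure ha hr, setIntegral_congr_fun measurableSet_Ioi hpow,
    Real.integral_rpow_mul_exp_neg_mul_Ioi ht hr, one_div, Real.inv_rpow hr.le,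
    Real.rpow_add hr, Real.rpow_neg hr.le]
  field_simp

theorem zero_mem_interior_integrableExpSet_log_gammaMeasure (ha : 0 < a) (hr : 0 < r) :
    0 ∈ interior (integrableExpSet Real.log (gammaMeasure a r)) := by
  have := isProbabilityMeasure_gammaMeasure ha hr
  refine mem_interior_iff_mem_nhds.2 (mem_of_superset (Ioi_mem_nhds (neg_lt_zero.2 ha)) ?_)
  intro t (ht : -a < t)
  have hat : 0 < a + t := by linarith
  refine mgf_pos_iff.1 ?_
  rw [mgf_log_gammaMeasure ha hr hat]
  have := Real.Gamma_pos_of_pos ha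
  have := Real.Gamma_pos_of_pos hat
  positivity

theorem integrable_log_gammaMeasure (ha : 0 < a) (hr : 0 < r) :
    Integrable Real.log (gammaMeasure a r) :=
  integrable_of_mem_interior_integrableExpSet
    (zero_mem_interior_integrableExpSet_log_gammaMeasure ha hr)

theorem integral_log_gammaMeasure (ha : 0 < a) (hr : 0 < r) :
    ∫ x, Real.log x ∂gammaMeasure a r = ψ a - Real.log r := by
  have := isProbabilityMeasure_gammaMeasure ha hr
  have hcgf : cgf Real.log (gammaMeasure a r) =ᶠ[𝓝 0] fun t ↦
      (Real.log ∘ Real.Gamma) (a + t) - Real.log (Real.Gamma a) - t * Real.log r := by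
    filter_upwards [Ioi_mem_nhds (neg_lt_zero.2 ha)] with t (ht : -a < t)
    have hat : 0 < a + t := by linarith
    have hΓ := (Real.Gamma_pos_of_pos ha).ne'
    have hΓt := (Real.Gamma_pos_of_pos hat).ne'
    rw [cgf, mgf_log_gammaMeasure ha hr hat,
      Real.log_mul (div_ne_zero hΓt hΓ) (Real.rpow_pos_of_pos hr _).ne', Real.log_div hΓt hΓ,
      Real.log_rpow hr, neg_mul, ← sub_eq_add_neg, Function.comp_apply]
  have hΓ : DifferentiableAt ℝ (Real.log ∘ Real.Gamma) a :=
    (Real.differentiableAt_log (Real.Gamma_pos_of_pos ha).ne').comp a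
      (Real.differentiableAt_Gamma fun m ↦ (lt_of_le_of_lt (neg_nonpos.2 m.cast_nonneg) ha).ne')
  have hderiv : HasDerivAt (fun t ↦
      (Real.log ∘ Real.Gamma) (a + t) - Real.log (Real.Gamma a) - t * Real.log r)
      (ψ a - Real.log r) 0 := by
    have h : HasDerivAt (Real.log ∘ Real.Gamma) (ψ a) (a + 0) := by
      simpa only [add_zero] using hΓ.hasDerivAt
    simpa using ((h.comp_const_add a 0).sub_const _).fun_sub
      ((hasDerivAt_id (0 : ℝ)).mul_const _)
  have hmean := deriv_cgf_zero (zero_mem_interior_integrableExpSet_log_gammaMeasure ha hr)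
  rw [probReal_univ, div_one, hcgf.deriv_eq, hderiv.deriv] at hmean
  exact hmean.symm

end GammaDistribution

section ChiSquared

open Set Filter Topology Module

theorem ext_of_mgf_id_eq {μ ν : Measure ℝ} [IsProbabilityMeasure μ] [IsFiniteMeasure ν]
    (h0 : 0 ∈ interior (integrableExpSet id μ)) (h : mgf id μ = mgf id ν) : μ = ν := by
  refine Measure.ext_of_charFun (funext fun t ↦ ?_)
  rw [← complexMGF_id_mul_I, ← complexMGF_id_mul_I]
  exact eqOn_complexMGF_of_mgf h (by simpa using h0)

/-- The chi-squared distribution with `k` degrees of freedom, as a gamma distribution; a junk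
measure for `k = 0`. -/
noncomputable def chiSquared (k : ℕ) : Measure ℝ := gammaMeasure (k / 2) (1 / 2)

variable {k : ℕ}

theorem isProbabilityMeasure_chiSquared (hk : k ≠ 0) : IsProbabilityMeasure (chiSquared k) :=
  isProbabilityMeasure_gammaMeasure (by positivity) (by positivity)

theorem ae_pos_chiSquared (k : ℕ) : ∀ᵐ x ∂chiSquared k, 0 < x :=
  ae_pos_gammaMeasure _ _

theorem integrable_log_chiSquared (hk : k ≠ 0) : Integrable Real.log (chiSquared k) :=
  integrable_log_gammaMeasure (by positivity) (by positivity)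

theorem integral_log_chiSquared (hk : k ≠ 0) :
    ∫ x, Real.log x ∂chiSquared k = ψ (k / 2) + Real.log 2 := by
  rw [chiSquared, integral_log_gammaMeasure (by positivity) (by positivity), one_div, Real.log_inv,
    sub_neg_eq_add]

/- For `t ≥ 1 / 2` both sides are `0`: the left one because the integral diverges, the right one
because of the conventions for the square root and the inverse. -/
theorem mgf_id_chiSquared (hk : k ≠ 0) (t : ℝ) :
    mgf id (chiSquared k) t = √(1 - 2 * t)⁻¹ ^ k := by
  rcases lt_or_ge t (1 / 2) with ht | ht
  · have hdiv : (1 / 2) / (1 / 2 - t) = (1 - 2 * t)⁻¹ := by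
      have : (1 / 2 - t) ≠ 0 := by linarith
      have : (1 - 2 * t) ≠ 0 := by linarith
      field_simp
    rw [chiSquared, mgf_id_gammaMeasure (by positivity) (by positivity) ht, hdiv,
      Real.rpow_div_two_eq_sqrt _ (by simp; linarith), Real.rpow_natCast]
  · rw [chiSquared, mgf_id_gammaMeasure_of_le (by positivity) (by positivity) ht,
      Real.sqrt_eq_zero_of_nonpos (inv_nonpos.2 (by linarith)), zero_pow hk]

theorem zero_mem_interior_integrableExpSet_id_chiSquared (hk : k ≠ 0) :
    0 ∈ interior (integrableExpSet id (chiSquared k)) := by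
  have := isProbabilityMeasure_chiSquared hk
  refine mem_interior_iff_mem_nhds.2 (mem_of_superset (Iio_mem_nhds (half_pos one_pos)) ?_)
  intro t (ht : t < 1 / 2)
  have : 0 < 1 - 2 * t := by linarith
  refine mgf_pos_iff.1 ?_
  rw [mgf_id_chiSquared hk]
  positivity

theorem mgf_sq_gaussianReal (t : ℝ) :
    mgf (fun x ↦ x ^ 2) (gaussianReal 0 1) t = √(1 - 2 * t)⁻¹ := by
  have hexp (x : ℝ) : gaussianPDFReal 0 1 x • Real.exp (t * x ^ 2) =
      (√(2 * Real.pi))⁻¹ * Real.exp (-((1 - 2 * t) / 2) * x ^ 2) := by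
    rw [gaussianPDFReal, smul_eq_mul, mul_assoc, ← Real.exp_add]
    push_cast
    ring_nf
  simp only [mgf, integral_gaussianReal_eq_integral_smul one_ne_zero, hexp]
  rw [integral_const_mul, integral_gaussian, ← Real.sqrt_inv, ← Real.sqrt_mul (by positivity)]
  congr 1
  field_simp

variable {E : Type*} [NormedAddCommGroup E] [InnerProductSpace ℝ E] [FiniteDimensional ℝ E]
  [MeasurableSpace E] [BorelSpace E]

variable (E) in
theorem mgf_norm_sq_stdGaussian (t : ℝ) :
    mgf (fun x ↦ ‖x‖ ^ 2) (stdGaussian E) t = √(1 - 2 * t)⁻¹ ^ finrank ℝ E := by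
  have hnorm (x : Fin (finrank ℝ E) → ℝ) :
      Real.exp (t * ‖∑ i, x i • stdOrthonormalBasis ℝ E i‖ ^ 2) = ∏ i, Real.exp (t * x i ^ 2) := by
    simp only [← (stdOrthonormalBasis ℝ E).sum_sq_inner_right,
      (stdOrthonormalBasis ℝ E).orthonormal.inner_right_fintype, Finset.mul_sum, Real.exp_sum]
  rw [mgf, stdGaussian, integral_map (Measurable.aemeasurable (by fun_prop)) (by fun_prop)]
  simp_rw [hnorm]
  rw [integral_fintype_prod_eq_prod (f := fun _ x ↦ Real.exp (t * x ^ 2))]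
  simp [← mgf_sq_gaussianReal t, mgf]

theorem map_norm_sq_stdGaussian [Nontrivial E] :
    (stdGaussian E).map (fun x ↦ ‖x‖ ^ 2) = chiSquared (finrank ℝ E) := by
  have hE : finrank ℝ E ≠ 0 := finrank_pos.ne'
  have := isProbabilityMeasure_chiSquared hE
  refine (ext_of_mgf_id_eq (zero_mem_interior_integrableExpSet_id_chiSquared hE) ?_).symm
  ext t
  rw [mgf_id_chiSquared hE, mgf_id_map (by fun_prop), mgf_norm_sq_stdGaussian]

end ChiSquared

section GramDeterminant

open Set Module

variable {E : Type*} [NormedAddCommGroup E] [InnerProductSpace ℝ E] {n : ℕ}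

theorem continuous_det_gram : Continuous fun v : Fin n → E ↦ (gram ℝ v).det := by
  refine Continuous.matrix_det (continuous_matrix fun i j ↦ ?_)
  simp only [gram_apply]
  fun_prop

variable [FiniteDimensional ℝ E]

/- The row operation which replaces `x` by its component `z` orthogonal to the span turns the first
row into `(‖z‖ ^ 2, 0, …, 0)`. -/
theorem det_gram_cons (x : E) (v : Fin n → E) :
    (gram ℝ (Fin.cons x v : Fin (n + 1) → E)).det =
      ‖(Submodule.span ℝ (range v))ᗮ.orthogonalProjectionOnto x‖ ^ 2 * (gram ℝ v).det := by
  set V := Submodule.span ℝ (range v)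
  set w : Fin (n + 1) → E := Fin.cons x v
  set z := Vᗮ.starProjection x
  obtain ⟨c, hc⟩ : ∃ c : Fin n → ℝ, ∑ i, c i • v i = x - z := by
    refine (Submodule.mem_span_range_iff_exists_fun ℝ).1 ?_
    have := Vᗮ.sub_starProjection_mem_orthogonal x
    rwa [Submodule.orthogonal_orthogonal] at this
  set b : Fin (n + 1) → ℝ := Fin.cons 1 fun i ↦ -c i
  have hz : ∑ k, b k • w k = z := by
    simp [Fin.sum_univ_succ, b, w, hc]
  have hzx : inner ℝ z x = ‖z‖ ^ 2 := Vᗮ.re_inner_starProjection_eq_normSq x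
  have hzv (i : Fin n) : inner ℝ z (v i) = 0 :=
    Submodule.inner_left_of_mem_orthogonal (Submodule.subset_span (mem_range_self i))
      (Submodule.coe_mem _)
  have hrow : ∑ k, b k • gram ℝ w k = Fin.cons (‖z‖ ^ 2) 0 := by
    ext j
    have hj : (∑ k, b k • gram ℝ w k) j = inner ℝ z (w j) := by
      simp [← hz, sum_inner, real_inner_smul_left, gram_apply]
    rw [hj]
    refine Fin.cases hzx hzv j
  have hdet := det_updateRow_sum (gram ℝ w) 0 b
  rw [hrow, det_succ_row_zero, Fin.sum_univ_succ] at hdet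
  have hsub : ((gram ℝ w).updateRow 0 (Fin.cons (‖z‖ ^ 2) 0)).submatrix Fin.succ Fin.succ =
      gram ℝ v := by
    ext i j
    simp [w, gram_apply]
  change _ = ‖z‖ ^ 2 * _
  clear_value z
  simpa [b, hsub, eq_comm] using hdet

variable [MeasurableSpace E] [BorelSpace E]

theorem map_orthogonalProjectionOnto_stdGaussian (V : Submodule ℝ E) :
    (stdGaussian E).map V.orthogonalProjectionOnto = stdGaussian V := by
  have : IsProbabilityMeasure ((stdGaussian E).map V.orthogonalProjectionOnto) :=
    Measure.isProbabilityMeasure_map (by fun_prop)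
  refine Measure.ext_of_charFun (funext fun t ↦ ?_)
  rw [charFun_apply, integral_map (by fun_prop) (by fun_prop)]
  simp_rw [Submodule.inner_orthogonalProjectionOnto_eq_of_mem_right]
  rw [← charFun_apply, charFun_stdGaussian, charFun_stdGaussian, Submodule.coe_norm]

theorem map_norm_sq_orthogonalProjectionOnto_stdGaussian (V : Submodule ℝ E) [Nontrivial V] :
    (stdGaussian E).map (fun x ↦ ‖V.orthogonalProjectionOnto x‖ ^ 2) =
      chiSquared (finrank ℝ V) := by
  rw [← map_norm_sq_stdGaussian, ← map_orthogonalProjectionOnto_stdGaussian V,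
    Measure.map_map (by fun_prop) (by fun_prop)]
  rfl

theorem measurePreserving_det_gram_cons_div {ν : Measure (Fin n → E)} [IsProbabilityMeasure ν]
    (hν : ∀ᵐ v ∂ν, LinearIndependent ℝ v) (hn : n < finrank ℝ E) :
    MeasurePreserving (fun p : (Fin n → E) × E ↦
        (gram ℝ (Fin.cons p.2 p.1 : Fin (n + 1) → E)).det / (gram ℝ p.1).det)
      (ν.prod (stdGaussian E)) (chiSquared (finrank ℝ E - n)) := by
  have := isProbabilityMeasure_chiSquared (Nat.sub_pos_of_lt hn).ne'
  refine measurePreserving_snd.comp ((MeasurePreserving.id ν).skew_product (g := fun v x ↦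
    (gram ℝ (Fin.cons x v : Fin (n + 1) → E)).det / (gram ℝ v).det) ?_ ?_)
  · exact Measurable.div (continuous_det_gram.comp (by fun_prop)).measurable
      (continuous_det_gram.comp continuous_fst).measurable
  filter_upwards [hν] with v hv
  set V := Submodule.span ℝ (range v)
  have hV : finrank ℝ Vᗮ = finrank ℝ E - n := by
    have := V.finrank_add_finrank_orthogonal
    rw [finrank_span_eq_card hv, Fintype.card_fin] at this
    omega
  have : Nontrivial Vᗮ := nontrivial_of_finrank_pos (R := ℝ) (by omega)
  simp_rw [det_gram_cons, mul_div_cancel_right₀ _ (det_gram_ne_zero_iff_linearIndependent.2 hv)]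
  rw [map_norm_sq_orthogonalProjectionOnto_stdGaussian, hV]

theorem measurePreserving_tail_head {α : Type*} [MeasurableSpace α] (μ : Measure α)
    [SigmaFinite μ] (n : ℕ) :
    MeasurePreserving (fun v : Fin (n + 1) → α ↦ (Fin.tail v, v 0))
      (Measure.pi fun _ ↦ μ) ((Measure.pi fun _ ↦ μ).prod μ) :=
  Measure.measurePreserving_swap.comp (measurePreserving_piFinSuccAbove (fun _ ↦ μ) 0)

theorem measurePreserving_tail {α : Type*} [MeasurableSpace α] (μ : Measure α)
    [IsProbabilityMeasure μ] (n : ℕ) :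
    MeasurePreserving (fun v : Fin (n + 1) → α ↦ Fin.tail v)
      (Measure.pi fun _ ↦ μ) (Measure.pi fun _ ↦ μ) :=
  measurePreserving_fst.comp (measurePreserving_tail_head μ n)

theorem ae_linearIndependent_pi_stdGaussian (hn : n ≤ finrank ℝ E) :
    ∀ᵐ v ∂Measure.pi fun _ : Fin n ↦ stdGaussian E, LinearIndependent ℝ v := by
  induction n with
  | zero => exact ae_of_all _ fun v ↦ linearIndependent_empty_type
  | succ n ih =>
    have hmp := (measurePreserving_det_gram_cons_div (ih (by omega)) hn).comp
      (measurePreserving_tail_head (stdGaussian E) n)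
    filter_upwards [hmp.quasiMeasurePreserving.ae (ae_pos_chiSquared _)] with v hv
    rw [Function.comp_apply, Fin.cons_self_tail] at hv
    exact linearIndependent_of_det_gram_ne_zero (div_ne_zero_iff.1 hv.ne').1

theorem measurePreserving_det_gram_div_det_gram_tail (hn : n < finrank ℝ E) :
    MeasurePreserving (fun v : Fin (n + 1) → E ↦ (gram ℝ v).det / (gram ℝ (Fin.tail v)).det)
      (Measure.pi fun _ ↦ stdGaussian E) (chiSquared (finrank ℝ E - n)) := by
  simpa only [Function.comp_def, Fin.cons_self_tail] using
    (measurePreserving_det_gram_cons_div (ae_linearIndependent_pi_stdGaussian hn.le) hn).comp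
      (measurePreserving_tail_head (stdGaussian E) n)

theorem log_det_gram_ae_eq (hn : n < finrank ℝ E) :
    (fun v : Fin (n + 1) → E ↦ Real.log (gram ℝ v).det) =ᵐ[Measure.pi fun _ ↦ stdGaussian E]
      fun v ↦ Real.log ((gram ℝ v).det / (gram ℝ (Fin.tail v)).det) +
        Real.log (gram ℝ (Fin.tail v)).det := by
  filter_upwards [ae_linearIndependent_pi_stdGaussian hn] with v hv
  have htail : LinearIndependent ℝ (Fin.tail v) := hv.comp _ (Fin.succ_injective n)
  rw [Real.log_div (det_gram_ne_zero_iff_linearIndependent.2 hv)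
    (det_gram_ne_zero_iff_linearIndependent.2 htail), sub_add_cancel]

theorem integrable_log_det_gram_pi_stdGaussian (hn : n ≤ finrank ℝ E) :
    Integrable (fun v : Fin n → E ↦ Real.log (gram ℝ v).det)
      (Measure.pi fun _ ↦ stdGaussian E) := by
  induction n with
  | zero => simp
  | succ n ih =>
    have hratio := (measurePreserving_det_gram_div_det_gram_tail hn).integrable_comp_of_integrable
      (integrable_log_chiSquared (Nat.sub_pos_of_lt hn).ne')
    have htail := (measurePreserving_tail (stdGaussian E) n).integrable_comp_of_integrable
      (ih (by omega))
    exact (hratio.add htail).congr (log_det_gram_ae_eq hn).symm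

theorem integral_log_det_gram_pi_stdGaussian (hn : n ≤ finrank ℝ E) :
    ∫ v : Fin n → E, Real.log (gram ℝ v).det ∂Measure.pi (fun _ ↦ stdGaussian E) =
      ∑ j ∈ Finset.range n, (ψ ((finrank ℝ E - j) / 2) + Real.log 2) := by
  induction n with
  | zero => simp
  | succ n ih =>
    have hk := (Nat.sub_pos_of_lt hn).ne'
    have hint := integrable_log_det_gram_pi_stdGaussian (E := E) (n := n) (by omega)
    have hratio := measurePreserving_det_gram_div_det_gram_tail (E := E) hn
    have htail := measurePreserving_tail (stdGaussian E) n
    calc ∫ v : Fin (n + 1) → E, Real.log (gram ℝ v).det ∂Measure.pi (fun _ ↦ stdGaussian E)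
      _ = ∫ v : Fin (n + 1) → E, Real.log ((gram ℝ v).det / (gram ℝ (Fin.tail v)).det)
            ∂Measure.pi (fun _ ↦ stdGaussian E) +
          ∫ v : Fin (n + 1) → E, Real.log (gram ℝ (Fin.tail v)).det
            ∂Measure.pi (fun _ ↦ stdGaussian E) :=
        (integral_congr_ae (log_det_gram_ae_eq hn)).trans (integral_add
          (hratio.integrable_comp_of_integrable (integrable_log_chiSquared hk))
          (htail.integrable_comp_of_integrable hint))
      _ = ∫ x, Real.log x ∂chiSquared (finrank ℝ E - n) +
          ∫ v : Fin n → E, Real.log (gram ℝ v).det ∂Measure.pi (fun _ ↦ stdGaussian E) :=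
        congrArg₂ (· + ·)
          (hratio.hasLaw.integral_comp (integrable_log_chiSquared hk).aestronglyMeasurable)
          (htail.hasLaw.integral_comp hint.aestronglyMeasurable)
      _ = ∑ j ∈ Finset.range (n + 1), (ψ ((finrank ℝ E - j) / 2) + Real.log 2) := by
        rw [integral_log_chiSquared hk, ih (by omega), Finset.sum_range_succ, add_comm,
          Nat.cast_sub (by omega)]

end GramDeterminant

section LogDet

open scoped MatrixOrder

variable {ι : Type*} [Fintype ι] [DecidableEq ι] {A B : Matrix ι ι ℝ} {σ : ℝ}

theorem det_cfc_eq_prod_eigenvalues (hA : A.IsHermitian) (f : ℝ → ℝ) :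
    (cfc f A).det = ∏ i, f (hA.eigenvalues i) := by
  rw [hA.cfc_eq, IsHermitian.cfc, Unitary.conjStarAlgAut_apply, det_mul_right_comm,
    Unitary.mul_star_self_of_mem (SetLike.coe_mem _), one_mul, det_diagonal]
  rfl

theorem det_one_add_smul_eq_prod_eigenvalues (hA : A.IsHermitian) (σ : ℝ) :
    (1 + σ • A).det = ∏ i, (1 + σ * hA.eigenvalues i) := by
  have hcfc : cfc (fun x ↦ 1 + σ * x) A = 1 + σ • A := by
    have : IsSelfAdjoint A := hA
    rw [cfc_const_add .., cfc_const_mul_id .., map_one]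
  rw [← hcfc, det_cfc_eq_prod_eigenvalues hA]

theorem det_one_add_eq_prod_eigenvalues (hA : A.IsHermitian) :
    (1 + A).det = ∏ i, (1 + hA.eigenvalues i) := by
  simpa only [one_smul, one_mul] using det_one_add_smul_eq_prod_eigenvalues hA 1

theorem one_le_det_one_add (hA : A.PosSemidef) : 1 ≤ (1 + A).det := by
  rw [det_one_add_eq_prod_eigenvalues hA.1]
  exact Finset.one_le_prod fun i _ ↦ le_add_of_nonneg_right (hA.eigenvalues_nonneg i)

theorem log_det_one_add_le_trace (hA : A.PosSemidef) : Real.log (1 + A).det ≤ A.trace := by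
  have hpos (i) : 0 < 1 + hA.1.eigenvalues i :=
    add_pos_of_pos_of_nonneg one_pos (hA.eigenvalues_nonneg i)
  rw [det_one_add_eq_prod_eigenvalues hA.1, Real.log_prod fun i _ ↦ (hpos i).ne',
    hA.1.trace_eq_sum_eigenvalues]
  exact Finset.sum_le_sum fun i _ ↦
    (Real.log_le_sub_one_of_pos (hpos i)).trans_eq (add_sub_cancel_left _ _)

theorem det_le_det_of_le (hA : A.PosDef) (hAB : A ≤ B) : A.det ≤ B.det := by
  obtain ⟨C, hC⟩ := CStarAlgebra.nonneg_iff_eq_star_mul_self.1 (sub_nonneg.2 hAB)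
  rw [star_eq_conjTranspose] at hC
  have hfactor : B = A * (1 + A⁻¹ * Cᴴ * C) := by
    rw [Matrix.mul_add, Matrix.mul_one, ← Matrix.mul_assoc, ← Matrix.mul_assoc,
      mul_nonsing_inv _ hA.det_pos.ne'.isUnit, Matrix.one_mul, ← hC, add_sub_cancel]
  rw [hfactor, det_mul, det_one_add_mul_comm, ← Matrix.mul_assoc]
  exact le_mul_of_one_le_right hA.det_pos.le
    (one_le_det_one_add (hA.inv.posSemidef.mul_mul_conjTranspose_same C))

theorem smul_one_le_of_le_eigenvalues (hA : A.IsHermitian) (h : ∀ i, σ ≤ hA.eigenvalues i) :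
    σ • 1 ≤ A := by
  rw [← Algebra.algebraMap_eq_smul_one, algebraMap_le_iff_le_spectrum (ha := hA),
    hA.spectrum_real_eq_range_eigenvalues]
  exact Set.forall_mem_range.2 h

theorem det_one_add_smul_mul_transpose_le {κ : Type*} [Fintype κ] [DecidableEq κ]
    {R : Matrix κ κ ℝ} (hσ : 0 ≤ σ) (hR : σ • 1 ≤ R) (X : Matrix ι κ ℝ) :
    (1 + σ • (X * Xᵀ)).det ≤ (1 + X * R * Xᵀ).det := by
  refine det_le_det_of_le (PosDef.one.add_posSemidef ?_) (add_le_add_right ?_ 1)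
  · exact (conjTranspose_eq_transpose_of_trivial X ▸ posSemidef_self_mul_conjTranspose X).smul hσ
  · rw [Matrix.le_iff] at hR ⊢
    simpa [Matrix.mul_sub, Matrix.sub_mul] using hR.mul_mul_conjTranspose_same X

end LogDet

section JensenLogOneAddMulExp

open scoped MatrixOrder

variable {σ : ℝ}

theorem convexOn_log_one_add_mul_exp (hσ : 0 ≤ σ) :
    ConvexOn ℝ Set.univ fun u ↦ Real.log (1 + σ * Real.exp u) := by
  have hpos (u : ℝ) : 0 < 1 + σ * Real.exp u := by positivity
  have hderiv (u : ℝ) : HasDerivAt (fun u ↦ Real.log (1 + σ * Real.exp u))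
      (σ * Real.exp u / (1 + σ * Real.exp u)) u :=
    (((Real.hasDerivAt_exp u).const_mul σ).const_add 1).log (hpos u).ne'
  refine Monotone.convexOn_univ_of_deriv (fun u ↦ (hderiv u).differentiableAt) fun u v huv ↦ ?_
  rw [(hderiv u).deriv, (hderiv v).deriv, div_le_div_iff₀ (hpos u) (hpos v)]
  have := mul_le_mul_of_nonneg_left (Real.exp_le_exp.2 huv) hσ
  linarith

theorem continuous_log_one_add_mul_exp (hσ : 0 ≤ σ) :
    Continuous fun u ↦ Real.log (1 + σ * Real.exp u) :=
  Continuous.log (by fun_prop) fun u ↦ by positivity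

theorem card_mul_log_one_add_mul_exp_le_log_det {ι : Type*} [Fintype ι] [DecidableEq ι] [Nonempty ι]
    {A : Matrix ι ι ℝ} (hA : A.PosDef) (hσ : 0 ≤ σ) :
    Fintype.card ι * Real.log (1 + σ * Real.exp (1 / Fintype.card ι * Real.log A.det)) ≤
      Real.log (1 + σ • A).det := by
  have hpos (i) : 0 < hA.1.eigenvalues i := hA.eigenvalues_pos i
  have hpos' (i) : 0 < 1 + σ * hA.1.eigenvalues i := by have := hpos i; positivity
  have hlogdet : Real.log A.det = ∑ i, Real.log (hA.1.eigenvalues i) := by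
    rw [hA.1.det_eq_prod_eigenvalues]
    exact Real.log_prod fun i _ ↦ (hpos i).ne'
  have hjensen := (convexOn_log_one_add_mul_exp hσ).map_sum_le (t := Finset.univ)
    (w := fun _ ↦ 1 / (Fintype.card ι : ℝ)) (p := fun i ↦ Real.log (hA.1.eigenvalues i))
    (fun _ _ ↦ by positivity) (by simp) (by simp)
  simp only [smul_eq_mul, ← Finset.mul_sum, Real.exp_log (hpos _), ← hlogdet] at hjensen
  rw [det_one_add_smul_eq_prod_eigenvalues hA.1, Real.log_prod fun i _ ↦ (hpos' i).ne']
  refine (le_div_iff₀' (by positivity)).1 (hjensen.trans_eq ?_)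
  ring

theorem card_mul_log_one_add_mul_exp_le_log_det_one_add_mul_mul_transpose
    {m ι : Type*} [Fintype m] [DecidableEq m] [Nonempty m] [Fintype ι] [DecidableEq ι]
    {R : Matrix ι ι ℝ} {X : Matrix m ι ℝ} (hσ : 0 ≤ σ) (hR : σ • 1 ≤ R) (hX : (X * Xᵀ).PosDef) :
    Fintype.card m * Real.log (1 + σ * Real.exp (1 / Fintype.card m * Real.log (X * Xᵀ).det)) ≤
      Real.log (1 + X * R * Xᵀ).det :=
  (card_mul_log_one_add_mul_exp_le_log_det hX hσ).trans <|
    Real.log_le_log (PosDef.one.add_posSemidef (hX.posSemidef.smul hσ)).det_pos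
      (det_one_add_smul_mul_transpose_le hσ hR X)

variable {Ω : Type*} [MeasurableSpace Ω] {μ : Measure Ω}

theorem integrable_log_one_add_mul_exp [IsFiniteMeasure μ] {f : Ω → ℝ} (hσ : 0 ≤ σ)
    (hf : Integrable f μ) :
    Integrable (fun x ↦ Real.log (1 + σ * Real.exp (f x))) μ := by
  refine ((integrable_const (Real.log (1 + σ))).add hf.abs).mono'
    ((continuous_log_one_add_mul_exp hσ).comp_aestronglyMeasurable hf.aestronglyMeasurable)
    (ae_of_all _ fun x ↦ ?_)
  have h1 : 1 ≤ 1 + σ * Real.exp (f x) := le_add_of_nonneg_right (by positivity)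
  have hle : 1 + σ * Real.exp (f x) ≤ (1 + σ) * Real.exp |f x| := by
    have := Real.one_le_exp (abs_nonneg (f x))
    have := mul_le_mul_of_nonneg_left (Real.exp_le_exp.2 (le_abs_self (f x))) hσ
    linarith
  rw [Real.norm_of_nonneg (Real.log_nonneg h1)]
  refine (Real.log_le_log (by positivity) hle).trans_eq ?_
  rw [Real.log_mul (by positivity) (by positivity), Real.log_exp]
  rfl

theorem log_one_add_mul_exp_integral_le [IsProbabilityMeasure μ] {f : Ω → ℝ} (hσ : 0 ≤ σ)
    (hf : Integrable f μ) :
    Real.log (1 + σ * Real.exp (∫ x, f x ∂μ)) ≤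
      ∫ x, Real.log (1 + σ * Real.exp (f x)) ∂μ :=
  (convexOn_log_one_add_mul_exp hσ).map_integral_le
    (continuous_log_one_add_mul_exp hσ).continuousOn isClosed_univ (ae_of_all _ fun _ ↦ trivial) hf
    (integrable_log_one_add_mul_exp hσ hf)

end JensenLogOneAddMulExp

section GaussianMatrix

/-- The law of an `m × n` matrix with independent standard Gaussian entries, given as the function
of its entries. -/
noncomputable abbrev stdGaussianMatrix (m n : Type*) [Fintype m] [Fintype n] :
    Measure (m → n → ℝ) :=
  Measure.pi fun _ ↦ Measure.pi fun _ ↦ gaussianReal 0 1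

variable {m ι : Type*} [Fintype ι] {n : ℕ}

theorem of_mul_transpose_eq_gram (X : m → ι → ℝ) :
    of X * (of X)ᵀ = gram ℝ fun i ↦ (WithLp.toLp 2 (X i) : EuclideanSpace ℝ ι) := by
  ext i j
  simp [gram_apply, mul_apply, PiLp.inner_apply, mul_comm]

variable (m ι) in
theorem measurePreserving_toLp_stdGaussianMatrix [Fintype m] :
    MeasurePreserving (fun (X : m → ι → ℝ) i ↦ (WithLp.toLp 2 (X i) : EuclideanSpace ℝ ι))
      (stdGaussianMatrix m ι) (Measure.pi fun _ ↦ stdGaussian (EuclideanSpace ℝ ι)) :=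
  measurePreserving_pi _ _ fun _ ↦ ⟨by fun_prop, map_pi_eq_stdGaussian⟩

theorem ae_posDef_mul_transpose_stdGaussianMatrix (hn : n ≤ Fintype.card ι) :
    ∀ᵐ X ∂stdGaussianMatrix (Fin n) ι, (of X * (of X)ᵀ).PosDef := by
  have hli := ae_linearIndependent_pi_stdGaussian (E := EuclideanSpace ℝ ι) (n := n) (by simpa)
  filter_upwards [(measurePreserving_toLp_stdGaussianMatrix _ ι).quasiMeasurePreserving.ae hli]
    with X hX
  rw [of_mul_transpose_eq_gram]
  exact posDef_gram_of_linearIndependent hX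

theorem integrable_log_det_mul_transpose_stdGaussianMatrix (hn : n ≤ Fintype.card ι) :
    Integrable (fun X ↦ Real.log (of X * (of X)ᵀ).det) (stdGaussianMatrix (Fin n) ι) := by
  simp_rw [of_mul_transpose_eq_gram]
  exact (measurePreserving_toLp_stdGaussianMatrix _ ι).integrable_comp_of_integrable
    (integrable_log_det_gram_pi_stdGaussian (by simpa))

theorem integral_log_det_mul_transpose_stdGaussianMatrix (hn : n ≤ Fintype.card ι) :
    ∫ X, Real.log (of X * (of X)ᵀ).det ∂stdGaussianMatrix (Fin n) ι =
      ∑ j ∈ Finset.range n, (ψ ((Fintype.card ι - j) / 2) + Real.log 2) := by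
  have hE : n ≤ Module.finrank ℝ (EuclideanSpace ℝ ι) := by simpa
  simp_rw [of_mul_transpose_eq_gram]
  rw [← finrank_euclideanSpace (𝕜 := ℝ), ← integral_log_det_gram_pi_stdGaussian hE]
  exact (measurePreserving_toLp_stdGaussianMatrix _ ι).hasLaw.integral_comp
    (integrable_log_det_gram_pi_stdGaussian hE).aestronglyMeasurable

variable [Fintype m]

theorem integrable_trace_mul_mul_transpose_stdGaussianMatrix (R : Matrix ι ι ℝ) :
    Integrable (fun X ↦ (of X * R * (of X)ᵀ).trace) (stdGaussianMatrix m ι) := by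
  have hL2 (i : m) (k : ι) : MemLp (fun X : m → ι → ℝ ↦ X i k) 2 (stdGaussianMatrix m ι) :=
    (IsGaussian.memLp_two_id (μ := gaussianReal 0 1)).comp_measurePreserving
      ((measurePreserving_eval (fun _ ↦ gaussianReal 0 1) k).comp
        (measurePreserving_eval (fun _ ↦ Measure.pi fun _ ↦ gaussianReal 0 1) i))
  simp only [trace, diag_apply, mul_apply, transpose_apply, of_apply, Finset.sum_mul]
  refine integrable_finsetSum _ fun i _ ↦ integrable_finsetSum _ fun l _ ↦
    integrable_finsetSum _ fun k _ ↦ ?_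
  simpa only [Pi.mul_apply, mul_left_comm, mul_assoc, mul_comm] using
    ((hL2 i k).integrable_mul (hL2 i l)).const_mul (R k l)

variable [DecidableEq m]

theorem integrable_log_det_one_add_mul_mul_transpose_stdGaussianMatrix {R : Matrix ι ι ℝ}
    (hR : R.PosSemidef) :
    Integrable (fun X ↦ Real.log (1 + of X * R * (of X)ᵀ).det) (stdGaussianMatrix m ι) := by
  refine (integrable_trace_mul_mul_transpose_stdGaussianMatrix R).mono' ?_ (ae_of_all _ fun X ↦ ?_)
  · have : Continuous fun X : m → ι → ℝ ↦ of X := continuous_id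
    exact (Real.measurable_log.comp (Continuous.measurable (by fun_prop))).aestronglyMeasurable
  · have hpsd : (of X * R * (of X)ᵀ).PosSemidef := by
      simpa using hR.mul_mul_conjTranspose_same (of X)
    rw [Real.norm_of_nonneg (Real.log_nonneg (one_le_det_one_add hpsd))]
    exact log_det_one_add_le_trace hpsd

end GaussianMatrix

/-- Lower bound on the expected log-determinant information rate: for `1 ≤ n ≤ q`,
`X` an `n × q` matrix of i.i.d. standard Gaussians and `R` a `q × q` real symmetric
positive semidefinite matrix all of whose eigenvalues are at least `σ > 0`,
`E_X log det (I_n + X R Xᵀ) ≥ n · log (1 + σ · exp((1/n) Σ_{j<n} (ψ((q-j)/2) + log 2)))`,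
where `ψ = deriv (log ∘ Γ)` is the digamma function. -/
theorem expected_log_det_one_add_mul_ge {n q : ℕ} (hn : 1 ≤ n) (hnq : n ≤ q)
    (R : Matrix (Fin q) (Fin q) ℝ) (hR : R.PosSemidef) (σ : ℝ) (hσ : 0 < σ)
    (heig : ∀ i, σ ≤ hR.1.eigenvalues i) :
    (n : ℝ) * Real.log (1 + σ * Real.exp ((1 / (n : ℝ)) *
        ∑ j ∈ Finset.range n,
          (deriv (Real.log ∘ Real.Gamma) (((q : ℝ) - j) / 2) + Real.log 2))) ≤
      ∫ X : Fin n → Fin q → ℝ,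
          Real.log (1 + Matrix.of X * R * (Matrix.of X)ᵀ).det
        ∂(Measure.pi fun _ : Fin n => Measure.pi fun _ : Fin q => gaussianReal 0 1) := by
  have hcard : n ≤ Fintype.card (Fin q) := by simpa
  have : Nonempty (Fin n) := Fin.pos_iff_nonempty.1 hn
  have hint := (integrable_log_det_mul_transpose_stdGaussianMatrix hcard).const_mul (1 / (n : ℝ))
  have hmean : ∫ X, 1 / (n : ℝ) * Real.log (of X * (of X)ᵀ).det ∂stdGaussianMatrix (Fin n) (Fin q) =
      1 / (n : ℝ) * ∑ j ∈ Finset.range n, (ψ (((q : ℝ) - j) / 2) + Real.log 2) := by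
    rw [integral_const_mul, integral_log_det_mul_transpose_stdGaussianMatrix hcard,
      Fintype.card_fin]
  have hjensen := mul_le_mul_of_nonneg_left (log_one_add_mul_exp_integral_le hσ.le hint)
    n.cast_nonneg
  rw [hmean, ← integral_const_mul] at hjensen
  refine hjensen.trans (integral_mono_ae
    ((integrable_log_one_add_mul_exp hσ.le hint).const_mul (n : ℝ))
    (integrable_log_det_one_add_mul_mul_transpose_stdGaussianMatrix hR) ?_)
  filter_upwards [ae_posDef_mul_transpose_stdGaussianMatrix hcard] with X hX
  simpa only [Fintype.card_fin] using
    card_mul_log_one_add_mul_exp_le_log_det_one_add_mul_mul_transpose hσ.le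
      (smul_one_le_of_le_eigenvalues hR.1 heig) hX
end

section
/- Let n ≤ q be positive integers and let μ be the probability measure on n×q real matrices under which all entries are i.i.d. standard Gaussian N(0,1). Then for μ-almost every X, the matrix X has rank n; equivalently, det(X Xᵀ) ≠ 0 for μ-almost every X. -/
open MeasureTheory ProbabilityTheory Matrix

/-! Only the absence of atoms matters. Some coordinate direction is transverse to a given proper
subspace of `ℝ^q`, so each line in that direction meets the subspace in at most one point, and by
Fubini the subspace is null. Exposing the rows one at a time, each row therefore almost surely
avoids the proper subspace spanned by the fewer than `q` rows already chosen. -/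

section LinearAlgebra

theorem exists_single_one_notMem {K ι : Type*} [Semiring K] [Finite ι] [DecidableEq ι]
    {W : Submodule K (ι → K)} (hW : W ≠ ⊤) : ∃ i, Pi.single i 1 ∉ W := by
  by_contra! h
  refine hW (top_le_iff.1 ?_)
  rw [← (Pi.basisFun K ι).span_eq, Submodule.span_le, Set.range_subset_iff]
  simpa using h

theorem subsingleton_setOfPred_update_mem {K ι : Type*} [DivisionRing K] [DecidableEq ι]
    {W : Submodule K (ι → K)} {i : ι} (hi : Pi.single i 1 ∉ W) (x : ι → K) :
    {t | Function.update x i t ∈ W}.Subsingleton := by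
  intro s hs t ht
  by_contra hst
  have hdiff : Function.update x i s - Function.update x i t = (s - t) • Pi.single i 1 := by
    rw [← Function.update_sub, sub_self, ← Pi.single_smul, smul_eq_mul, mul_one, Pi.single]
  have hmem : (s - t) • Pi.single i 1 ∈ W := hdiff ▸ W.sub_mem hs ht
  exact hi ((W.smul_mem_iff (sub_ne_zero.2 hst)).1 hmem)

theorem span_image_finset_ne_top {K E ι : Type*} [Ring K] [StrongRankCondition K]
    [AddCommGroup E] [Module K E] {s : Finset ι} (hs : s.card < Module.finrank K E)
    (v : ι → E) : Submodule.span K (v '' s) ≠ ⊤ := by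
  classical
  rw [← Finset.coe_image]
  refine (span_lt_top_of_card_lt_finrank ?_).ne
  rw [Finset.toFinset_coe]
  exact Finset.card_image_le.trans_lt hs

theorem linearIndepOn_update_insert {K E ι : Type*} [DivisionRing K] [AddCommGroup E] [Module K E]
    [DecidableEq ι] {s : Set ι} {i : ι} (hi : i ∉ s) (v : ι → E) (x : E) :
    LinearIndepOn K (Function.update v i x) (insert i s) ↔
      LinearIndepOn K (Function.update v i x) s ∧ x ∉ Submodule.span K (v '' s) := by
  have himage : Function.update v i x '' s = v '' s :=
    Set.image_congr fun j hj => Function.update_of_ne (ne_of_mem_of_not_mem hj hi) x v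
  rw [linearIndepOn_insert hi, himage, Function.update_self]

theorem det_self_mul_transpose_ne_zero_iff {m n R : Type*} [Fintype m] [DecidableEq m] [Fintype n]
    [Field R] [LinearOrder R] [IsStrictOrderedRing R] {A : Matrix m n R} :
    (A * Aᵀ).det ≠ 0 ↔ A.rank = Fintype.card m := by
  rw [← isUnit_iff_ne_zero, ← isUnit_iff_isUnit_det, ← linearIndependent_rows_iff_isUnit,
    linearIndependent_iff_card_eq_finrank_span, Set.finrank, ← rank_eq_finrank_span_row,
    rank_self_mul_transpose, eq_comm]

end LinearAlgebra

section ProductMeasure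

variable {𝕜 ι : Type*}

theorem ae_pi_of_forall_ae_update [Fintype ι] [DecidableEq ι] {α : ι → Type*}
    [∀ i, MeasurableSpace (α i)] {μ : ∀ i, Measure (α i)} [∀ i, SigmaFinite (μ i)]
    {p : (∀ i, α i) → Prop} (hp : MeasurableSet {x | p x}) (i : ι)
    (h : ∀ x, ∀ᵐ t ∂μ i, p (Function.update x i t)) : ∀ᵐ x ∂Measure.pi μ, p x := by
  have hslice (x : ∀ i, α i) :
      ∫⁻ t, {x | p x}ᶜ.indicator 1 (Function.update x i t) ∂μ i = 0 := by
    refine lintegral_eq_zero_of_ae_eq_zero ?_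
    filter_upwards [h x] with t ht using Set.indicator_of_notMem (not_not.2 ht) 1
  have hmeas : Measurable ({x | p x}ᶜ.indicator (1 : (∀ i, α i) → ENNReal)) :=
    measurable_one.indicator hp.compl
  rw [ae_iff, ← Set.compl_ofPred, ← lintegral_indicator_one hp.compl]
  simpa using lintegral_eq_of_lmarginal_eq (μ := μ) {i} hmeas measurable_zero
    (by simp only [lmarginal_singleton, hslice, Pi.zero_apply, lintegral_zero])

variable [NontriviallyNormedField 𝕜] [CompleteSpace 𝕜]

theorem measure_pi_submodule_eq_zero [Fintype ι] [MeasurableSpace 𝕜] [OpensMeasurableSpace 𝕜]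
    [SecondCountableTopology 𝕜] (μ : ι → Measure 𝕜) [∀ i, SigmaFinite (μ i)]
    [∀ i, NullSingletonClass (μ i)] {W : Submodule 𝕜 (ι → 𝕜)} (hW : W ≠ ⊤) :
    Measure.pi μ W = 0 := by
  classical
  obtain ⟨i, hi⟩ := exists_single_one_notMem hW
  have hmeas : MeasurableSet {x | x ∉ W} := W.closed_of_finiteDimensional.measurableSet.compl
  refine measure_eq_zero_iff_ae_notMem.2 (ae_pi_of_forall_ae_update hmeas i fun x => ?_)
  have hline := subsingleton_setOfPred_update_mem hi x
  exact measure_eq_zero_iff_ae_notMem.1 (hline.measure_zero (μ i))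

variable {E : Type*} [NormedAddCommGroup E] [NormedSpace 𝕜 E] [MeasurableSpace E]
  [OpensMeasurableSpace E] [SecondCountableTopology E]

theorem measurableSet_linearIndepOn [Finite ι] (s : Set ι) :
    MeasurableSet {X : ι → E | LinearIndepOn 𝕜 X s} := by
  have hrestrict : Continuous fun (X : ι → E) (i : s) => X i := by fun_prop
  exact (isOpen_setOfPred_linearIndependent.preimage hrestrict).measurableSet

theorem ae_linearIndependent_pi [Fintype ι] {μ : ι → Measure E} [∀ i, SigmaFinite (μ i)]
    (hμ : ∀ i, ∀ W : Submodule 𝕜 E, W ≠ ⊤ → μ i W = 0)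
    (hι : Fintype.card ι ≤ Module.finrank 𝕜 E) :
    ∀ᵐ X ∂Measure.pi μ, LinearIndependent 𝕜 X := by
  classical
  suffices ∀ s : Finset ι, ∀ᵐ X ∂Measure.pi μ, LinearIndepOn 𝕜 X s by
    simpa only [Finset.coe_univ, linearIndepOn_univ_iff] using this Finset.univ
  intro s
  induction s using Finset.induction_on with
  | empty => simp
  | insert i s hi ih =>
    rw [Finset.coe_insert]
    have hstep : ∀ᵐ X ∂Measure.pi μ, LinearIndepOn 𝕜 X s → LinearIndepOn 𝕜 X (insert i s) := by
      refine ae_pi_of_forall_ae_update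
        ((measurableSet_linearIndepOn _).imp (measurableSet_linearIndepOn _)) i fun X => ?_
      have hspan : Submodule.span 𝕜 (X '' s) ≠ ⊤ :=
        span_image_finset_ne_top ((Finset.card_lt_univ_of_notMem hi).trans_le hι) X
      filter_upwards [measure_eq_zero_iff_ae_notMem.1 (hμ i _ hspan)] with x hx hs
      exact (linearIndepOn_update_insert hi X x).2 ⟨hs, hx⟩
    filter_upwards [ih, hstep] with X hs hinsert using hinsert hs

end ProductMeasure

theorem gaussian_matrix_ae_full_rank_general {m n : Type*} [Fintype m] [DecidableEq m] [Fintype n]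
    (hmn : Fintype.card m ≤ Fintype.card n) (μ : m → n → Measure ℝ) [∀ i j, SigmaFinite (μ i j)]
    [∀ i j, NullSingletonClass (μ i j)] :
    ∀ᵐ X : m → n → ℝ ∂(Measure.pi fun i => Measure.pi (μ i)),
      (Matrix.of X).rank = Fintype.card m ∧ (Matrix.of X * (Matrix.of X)ᵀ).det ≠ 0 := by
  have hindep : ∀ᵐ X ∂(Measure.pi fun i => Measure.pi (μ i)), LinearIndependent ℝ X :=
    ae_linearIndependent_pi (fun i _ hW => measure_pi_submodule_eq_zero (μ i) hW)
      (hmn.trans_eq (Module.finrank_fintype_fun_eq_card ℝ).symm)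
  filter_upwards [hindep] with X hX
  have hrank : (Matrix.of X).rank = Fintype.card m := LinearIndependent.rank_matrix hX
  exact ⟨hrank, det_self_mul_transpose_ne_zero_iff.2 hrank⟩

/-- An `n × q` matrix of i.i.d. standard Gaussians with `1 ≤ n ≤ q` almost surely
has full rank `n`; equivalently `det (X Xᵀ) ≠ 0` almost surely. -/
theorem gaussian_matrix_ae_full_rank {n q : ℕ} (hn : 1 ≤ n) (hnq : n ≤ q) :
    ∀ᵐ X : Fin n → Fin q → ℝ
      ∂(Measure.pi fun _ : Fin n => Measure.pi fun _ : Fin q => gaussianReal 0 1),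
      (Matrix.of X).rank = n ∧ (Matrix.of X * (Matrix.of X)ᵀ).det ≠ 0 := by
  have := nullSingletonClass_gaussianReal (μ := 0) one_ne_zero
  simpa using gaussian_matrix_ae_full_rank_general (by simpa using hnq)
    fun (_ : Fin n) (_ : Fin q) => gaussianReal 0 1
end

section
/- Let r : ℤ → ℝ satisfy r(−τ) = r(τ) for all τ and r(τ) = 0 for all |τ| ≥ N (some N), define its symbol S(ω) = Σ_{τ ∈ ℤ} r(τ) · cos(τω), and assume S(ω) > 0 for all ω ∈ [0, 2π]. For any n ≥ 1 let T_n(r) be the n×n real Toeplitz matrix with entries (T_n(r))_{ij} = r(i − j). Then det T_n(r) ≥ exp( (n / (2π)) · ∫_0^{2π} log S(ω) dω ). -/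
open Matrix

/-!
Expanding along the last row and column, `det T_{n+1} = det T_n * (u* T_{n+1} u)` for some vector
`u` with last entry `1`. If the entries of `T_{n+1}` are the Fourier coefficients of `S`, then
`u* T_{n+1} u` is the mean of `|p|² S` over the unit circle, `p` the polynomial with coefficients
`u`. Since `p` is monic, its Mahler measure is at least `1`, so `log (|p|² S)` has at least the mean
of `log S`, and Jensen's inequality bounds the mean of `|p|² S` below by `exp (mean of log S)`.
-/

open MeasureTheory Polynomial AddCircle
open scoped Real ComplexOrder

local instance fact_zero_lt_two_pi : Fact (0 < 2 * π) := ⟨Real.two_pi_pos⟩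

/-- The `n × n` Toeplitz matrix `T_n(c)` of a two-sided sequence `c`, with `c (i - j)` in row `i`
and column `j`. -/
def toeplitzMatrix {R : Type*} (c : ℤ → R) (n : ℕ) : Matrix (Fin n) (Fin n) R :=
  Matrix.of fun i j ↦ c ((i : ℤ) - (j : ℤ))

theorem map_det_toeplitzMatrix {R R' : Type*} [CommRing R] [CommRing R'] (f : R →+* R')
    (c : ℤ → R) (n : ℕ) :
    f (toeplitzMatrix c n).det = (toeplitzMatrix (fun k ↦ f (c k)) n).det :=
  f.map_det _

section LastRowExpansion

variable {K : Type*} [Field K] {n : ℕ} (A : Matrix (Fin (n + 1)) (Fin (n + 1)) K)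

theorem exists_mulVec_eq_single_last (hA : (A.submatrix Fin.castSucc Fin.castSucc).det ≠ 0) :
    ∃ u : Fin (n + 1) → K, u (Fin.last n) = 1 ∧
      A *ᵥ u = Pi.single (Fin.last n) (A.det / (A.submatrix Fin.castSucc Fin.castSucc).det) := by
  set d := (A.submatrix Fin.castSucc Fin.castSucc).det with hd
  have hlast : A.cramer (Pi.single (Fin.last n) 1) (Fin.last n) = d := by
    rw [cramer_eq_adjugate_mulVec, mulVec_single_one, col_apply, adjugate_fin_succ_eq_det_submatrix]
    simp [hd, Fin.succAbove_last, ← two_mul]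
  refine ⟨d⁻¹ • A.cramer (Pi.single (Fin.last n) 1), by simp [hlast, hA], ?_⟩
  rw [mulVec_smul, mulVec_cramer, smul_smul, ← Pi.single_smul, smul_eq_mul, mul_one,
    div_eq_inv_mul]

theorem exists_det_eq_det_mul_star_dotProduct_mulVec [StarRing K]
    (hA : (A.submatrix Fin.castSucc Fin.castSucc).det ≠ 0) :
    ∃ u : Fin (n + 1) → K, u (Fin.last n) = 1 ∧
      A.det = (A.submatrix Fin.castSucc Fin.castSucc).det * (star u ⬝ᵥ A *ᵥ u) := by
  obtain ⟨u, hu, hAu⟩ := exists_mulVec_eq_single_last A hA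
  refine ⟨u, hu, ?_⟩
  rw [hAu, dotProduct_single, Pi.star_apply, hu, star_one, one_mul, mul_div_cancel₀ _ hA]

end LastRowExpansion

theorem exp_integral_log_le_integral {α : Type*} [MeasurableSpace α] {μ : Measure α}
    [IsProbabilityMeasure μ] {f : α → ℝ} (hpos : ∀ᵐ x ∂μ, 0 < f x) (hf : Integrable f μ)
    (hlog : Integrable (fun x ↦ Real.log (f x)) μ) :
    Real.exp (∫ x, Real.log (f x) ∂μ) ≤ ∫ x, f x ∂μ := by
  have hexp : (fun x ↦ Real.exp (Real.log (f x))) =ᵐ[μ] f := hpos.mono fun _ ↦ Real.exp_log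
  rw [← integral_congr_ae hexp]
  exact convexOn_exp.map_integral_le Real.continuousOn_exp isClosed_univ (by simp) hlog
    (hf.congr hexp.symm)

section HaarAddCircle

variable {T : ℝ} [hT : Fact (0 < T)] {E : Type*} [NormedAddCommGroup E]

theorem integral_haarAddCircle_eq_smul_intervalIntegral [NormedSpace ℝ E] (f : AddCircle T → E) :
    ∫ x, f x ∂haarAddCircle = T⁻¹ • ∫ ω in (0 : ℝ)..T, f ω := by
  rw [integral_haarAddCircle, ← AddCircle.intervalIntegral_preimage T 0, zero_add]

theorem integrable_haarAddCircle_iff_intervalIntegrable {f : AddCircle T → E}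
    (hf : AEStronglyMeasurable f) :
    Integrable f haarAddCircle ↔ IntervalIntegrable (fun ω : ℝ ↦ f ω) volume 0 T := by
  have hmk := AddCircle.measurePreserving_mk T 0
  rw [zero_add] at hmk
  rw [← integrable_smul_measure (ENNReal.ofReal_pos.2 hT.out).ne' ENNReal.ofReal_ne_top,
    ← volume_eq_smul_haarAddCircle, intervalIntegrable_iff_integrableOn_Ioc_of_le hT.out.le,
    IntegrableOn, ← hmk.integrable_comp hf, Function.comp_def]

end HaarAddCircle

section PolynomialOnCircle

theorem toAddCircle_coe (p : ℂ[X]) (ω : ℝ) :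
    p.toAddCircle (ω : AddCircle (2 * π)) = p.eval (circleMap 0 1 ω) := by
  simp [toAddCircle, toCircle, circleMap]

theorem ae_toAddCircle_ne_zero {p : ℂ[X]} (hp : p ≠ 0) :
    ∀ᵐ x ∂haarAddCircle, p.toAddCircle x ≠ 0 := by
  have : Nontrivial (AddCircle (2 * π)) := ⟨(π : ℝ), 0, Real.Angle.pi_ne_zero⟩
  have hinj : Function.Injective fun x : AddCircle (2 * π) ↦ (x.toCircle : ℂ) :=
    Subtype.val_injective.comp (injective_toCircle Real.two_pi_pos.ne')
  have hfin := (finite_setOfPred_isRoot hp).preimage hinj.injOn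
  filter_upwards [compl_mem_ae_iff.2 (hfin.measure_zero haarAddCircle)] with x hx
  simpa [toAddCircle] using hx

theorem integrable_log_norm_toAddCircle (p : ℂ[X]) :
    Integrable (fun x ↦ Real.log ‖p.toAddCircle x‖) haarAddCircle := by
  have hmeas : Measurable fun x ↦ Real.log ‖p.toAddCircle x‖ :=
    Real.measurable_log.comp (map_continuous p.toAddCircle).norm.measurable
  simpa only [integrable_haarAddCircle_iff_intervalIntegrable hmeas.aestronglyMeasurable,
    toAddCircle_coe] using p.intervalIntegrable_mahlerMeasure

theorem integral_log_norm_toAddCircle (p : ℂ[X]) :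
    ∫ x, Real.log ‖p.toAddCircle x‖ ∂haarAddCircle = p.logMahlerMeasure := by
  simp only [integral_haarAddCircle_eq_smul_intervalIntegral, toAddCircle_coe,
    logMahlerMeasure_def, Real.circleAverage_def, smul_eq_mul]

theorem logMahlerMeasure_nonneg {p : ℂ[X]} (hp : p.Monic) : 0 ≤ p.logMahlerMeasure := by
  rw [logMahlerMeasure_eq_log_MahlerMeasure]
  exact Real.log_nonneg (one_le_mahlerMeasure_of_one_le_norm_leadingCoeff (by simp [hp]))

theorem integrable_norm_toAddCircle_sq_mul (p : ℂ[X]) {S : AddCircle (2 * π) → ℝ}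
    (hS : Integrable S haarAddCircle) :
    Integrable (fun x ↦ ‖p.toAddCircle x‖ ^ 2 * S x) haarAddCircle := by
  refine hS.bdd_mul (c := ‖p.toAddCircle‖ ^ 2) (by fun_prop) (.of_forall fun x ↦ ?_)
  rw [norm_pow, norm_norm]
  gcongr
  exact p.toAddCircle.norm_coe_le_norm x

theorem exp_integral_log_le_integral_norm_toAddCircle_sq_mul {p : ℂ[X]} (hp : p.Monic)
    {S : AddCircle (2 * π) → ℝ} (hpos : ∀ᵐ x ∂haarAddCircle, 0 < S x)
    (hS : Integrable S haarAddCircle) (hlog : Integrable (fun x ↦ Real.log (S x)) haarAddCircle) :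
    Real.exp (∫ x, Real.log (S x) ∂haarAddCircle) ≤
      ∫ x, ‖p.toAddCircle x‖ ^ 2 * S x ∂haarAddCircle := by
  have hne := ae_toAddCircle_ne_zero hp.ne_zero
  have hlogp := integrable_log_norm_toAddCircle p
  have hlog_mul : (fun x ↦ Real.log (‖p.toAddCircle x‖ ^ 2 * S x)) =ᵐ[haarAddCircle]
      fun x ↦ 2 * Real.log ‖p.toAddCircle x‖ + Real.log (S x) := by
    filter_upwards [hne, hpos] with x hpx hSx
    rw [Real.log_mul (by positivity) hSx.ne', Real.log_pow, Nat.cast_ofNat]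
  calc
    _ ≤ Real.exp (2 * p.logMahlerMeasure + ∫ x, Real.log (S x) ∂haarAddCircle) := by
      have := logMahlerMeasure_nonneg hp
      gcongr
      linarith
    _ = Real.exp (∫ x, Real.log (‖p.toAddCircle x‖ ^ 2 * S x) ∂haarAddCircle) := by
      rw [integral_congr_ae hlog_mul, integral_add (hlogp.const_mul 2) hlog, integral_const_mul,
        integral_log_norm_toAddCircle]
    _ ≤ _ := by
      refine exp_integral_log_le_integral ?_ (integrable_norm_toAddCircle_sq_mul p hS)
        (((hlogp.const_mul 2).add hlog).congr hlog_mul.symm)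
      filter_upwards [hne, hpos] with x hpx hSx
      positivity

theorem ofFn_toAddCircle_apply {n : ℕ} (u : Fin n → ℂ) (x : AddCircle (2 * π)) :
    (ofFn n u).toAddCircle x = ∑ i, u i * fourier (i : ℤ) x := by
  simp only [ofFn_eq_sum_monomial, map_sum, toAddCircle_monomial_eq_smul_fourier,
    ContinuousMap.coe_sum, Finset.sum_apply, ContinuousMap.coe_smul, Pi.smul_apply, smul_eq_mul]

theorem norm_sq_ofFn_toAddCircle_apply {n : ℕ} (u : Fin n → ℂ) (x : AddCircle (2 * π)) :
    (‖(ofFn n u).toAddCircle x‖ ^ 2 : ℂ) =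
      ∑ i, ∑ j, star (u i) * u j * fourier (-((i : ℤ) - (j : ℤ))) x := by
  rw [← Complex.conj_mul', ofFn_toAddCircle_apply, map_sum, Finset.sum_mul_sum]
  refine Finset.sum_congr rfl fun i _ ↦ Finset.sum_congr rfl fun j _ ↦ ?_
  rw [map_mul, ← fourier_neg, neg_sub, sub_eq_neg_add, fourier_add]
  simp only [starRingEnd_apply]
  ring

theorem monic_ofFn {R : Type*} [Semiring R] [DecidableEq R] {n : ℕ} {u : Fin (n + 1) → R}
    (hu : u (Fin.last n) = 1) : (ofFn (n + 1) u).Monic := by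
  refine monic_of_natDegree_le_of_coeff_eq_one n
    (Nat.lt_succ_iff.1 (ofFn_natDegree_lt n.succ_pos u)) ?_
  rw [ofFn_coeff_eq_val_of_lt u n.lt_succ_self, ← hu]
  rfl

end PolynomialOnCircle

section IntegrableSymbol

theorem star_dotProduct_toeplitzMatrix_fourierCoeff_mulVec {f : AddCircle (2 * π) → ℂ}
    (hf : Integrable f haarAddCircle) {n : ℕ} (u : Fin n → ℂ) :
    star u ⬝ᵥ toeplitzMatrix (fourierCoeff f) n *ᵥ u =
      ∫ x, (‖(ofFn n u).toAddCircle x‖ ^ 2 : ℂ) * f x ∂haarAddCircle := by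
  have hterm (i j : Fin n) : Integrable
      (fun x ↦ star (u i) * u j * (fourier (-((i : ℤ) - (j : ℤ))) x * f x)) haarAddCircle :=
    (hf.fourier_smul _).const_mul _
  simp only [norm_sq_ofFn_toAddCircle_apply, Finset.sum_mul, mul_assoc _ (fourier _ _)]
  rw [integral_finsetSum _ fun i _ ↦ integrable_finsetSum _ fun j _ ↦ hterm i j]
  simp only [integral_finsetSum _ fun j _ ↦ hterm _ j, integral_const_mul, dotProduct, mulVec,
    Finset.mul_sum, toeplitzMatrix, of_apply, fourierCoeff, smul_eq_mul, Pi.star_apply]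
  refine Finset.sum_congr rfl fun i _ ↦ Finset.sum_congr rfl fun j _ ↦ ?_
  ring

variable {S : AddCircle (2 * π) → ℝ} (hpos : ∀ᵐ x ∂haarAddCircle, 0 < S x)
  (hS : Integrable S haarAddCircle) (hlog : Integrable (fun x ↦ Real.log (S x)) haarAddCircle)

include hpos hS hlog

theorem exp_integral_log_le_star_dotProduct_toeplitzMatrix_mulVec {n : ℕ} {u : Fin (n + 1) → ℂ}
    (hu : u (Fin.last n) = 1) :
    ((Real.exp (∫ x, Real.log (S x) ∂haarAddCircle) : ℝ) : ℂ) ≤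
      star u ⬝ᵥ toeplitzMatrix (fourierCoeff fun x ↦ (S x : ℂ)) (n + 1) *ᵥ u := by
  rw [star_dotProduct_toeplitzMatrix_fourierCoeff_mulVec
    (f := fun x ↦ (S x : ℂ)) hS.ofReal]
  exact_mod_cast exp_integral_log_le_integral_norm_toAddCircle_sq_mul (monic_ofFn hu) hpos hS hlog

theorem exp_mul_integral_log_le_det_toeplitzMatrix_fourierCoeff (n : ℕ) :
    ((Real.exp (n * ∫ x, Real.log (S x) ∂haarAddCircle) : ℝ) : ℂ) ≤
      (toeplitzMatrix (fourierCoeff fun x ↦ (S x : ℂ)) n).det := by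
  induction n with
  | zero => simp
  | succ n ih =>
    set A := toeplitzMatrix (fourierCoeff fun x ↦ (S x : ℂ)) (n + 1)
    change _ ≤ (A.submatrix Fin.castSucc Fin.castSucc).det at ih
    have hdet_pos := (Complex.zero_lt_real.2 (Real.exp_pos _)).trans_le ih
    obtain ⟨u, hu, hdet⟩ := exists_det_eq_det_mul_star_dotProduct_mulVec A hdet_pos.ne'
    rw [hdet, Nat.cast_succ, add_one_mul, Real.exp_add, Complex.ofReal_mul]
    exact mul_le_mul ih
      (exp_integral_log_le_star_dotProduct_toeplitzMatrix_mulVec hpos hS hlog hu)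
      (Complex.zero_le_real.2 (Real.exp_nonneg _)) hdet_pos.le

end IntegrableSymbol

section FourierSeries

/-- The Fourier series `∑ k, c k * exp (2 π i k x / T)` as a continuous function on the circle,
that is, the symbol of the Toeplitz matrices of `c`. The sum is taken in the uniform norm; it is `0`
by convention if it does not converge unconditionally there. -/
noncomputable def fourierSeries (T : ℝ) (c : ℤ → ℂ) : C(AddCircle T, ℂ) := ∑' k, c k • fourier k

variable {T : ℝ} [Fact (0 < T)] {c : ℤ → ℂ}

theorem summable_smul_fourier (hc : Summable c) :
    Summable fun k ↦ c k • (fourier k : C(AddCircle T, ℂ)) :=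
  .of_norm <| by simpa only [norm_smul, fourier_norm, mul_one] using hc.norm

theorem hasSum_fourierSeries_apply (hc : Summable c) (x : AddCircle T) :
    HasSum (fun k ↦ c k * fourier k x) (fourierSeries T c x) :=
  (ContinuousMap.evalCLM ℂ x).hasSum (summable_smul_fourier hc).hasSum

theorem fourierCoeff_fourierSeries (hc : Summable c) :
    fourierCoeff (fourierSeries T c) = c := by
  ext k
  let L : C(AddCircle T, ℂ) →L[ℂ] ℂ :=
    innerSL ℂ (fourierLp 2 k) ∘L ContinuousMap.toLp 2 haarAddCircle ℂ
  have hL (f : C(AddCircle T, ℂ)) : L f = fourierCoeff f k := by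
    rw [← fourierCoeff_toLp, ← fourierBasis_repr, HilbertBasis.repr_apply_apply,
      coe_fourierBasis]
    rfl
  have hterm (j : ℤ) : L (c j • fourier j) = if j = k then c j else 0 := by
    rw [map_smul, hL, fourierCoeff_fourier, Pi.single_apply, smul_eq_mul, mul_ite, mul_one,
      mul_zero]
    simp only [eq_comm]
  rw [← hL, fourierSeries, L.map_tsum (summable_smul_fourier hc)]
  simp only [hterm, tsum_ite_eq]

theorem ofReal_re_fourierSeries_apply (hc : Summable c) (hsymm : ∀ k, c (-k) = star (c k))
    (x : AddCircle T) : ((fourierSeries T c x).re : ℂ) = fourierSeries T c x := by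
  have hsum := hasSum_fourierSeries_apply hc x
  have hconj := (Equiv.neg ℤ).hasSum_iff.2 hsum.star
  refine Complex.conj_eq_iff_re.1 (hconj.unique ?_)
  convert hsum using 2 with k
  rw [Function.comp_apply, Equiv.neg_apply, hsymm, star_mul', star_star, fourier_neg]
  simp only [← starRingEnd_apply, Complex.conj_conj]

theorem re_fourierSeries_ofReal_coe {r : ℤ → ℝ} (hr : Summable r) (ω : ℝ) :
    (fourierSeries (2 * π) (fun k ↦ (r k : ℂ)) ω).re = ∑' k : ℤ, r k * Real.cos (k * ω) := by
  rw [← (Complex.hasSum_re (hasSum_fourierSeries_apply (Complex.summable_ofReal.2 hr) _)).tsum_eq]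
  refine tsum_congr fun k ↦ ?_
  have hexp : (2 * π * Complex.I * k * ω / (2 * π : ℝ) : ℂ) = (k * ω : ℝ) * Complex.I := by
    push_cast
    field_simp
  rw [Complex.re_ofReal_mul, fourier_coe_apply, hexp, Complex.exp_ofReal_mul_I_re]

theorem exp_mul_integral_log_re_fourierSeries_le_det_toeplitzMatrix (hc : Summable c)
    (hsymm : ∀ k, c (-k) = star (c k)) (hpos : ∀ x, 0 < (fourierSeries (2 * π) c x).re) (n : ℕ) :
    ((Real.exp (n * ∫ x, Real.log (fourierSeries (2 * π) c x).re ∂haarAddCircle) : ℝ) : ℂ) ≤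
      (toeplitzMatrix c n).det := by
  have hcont : Continuous fun x ↦ (fourierSeries (2 * π) c x).re := by fun_prop
  have hlog := hcont.log fun x ↦ (hpos x).ne'
  have hcoeff : fourierCoeff (fun x ↦ ((fourierSeries (2 * π) c x).re : ℂ)) = c := by
    simp only [ofReal_re_fourierSeries_apply hc hsymm, fourierCoeff_fourierSeries hc]
  have h := exp_mul_integral_log_le_det_toeplitzMatrix_fourierCoeff (.of_forall hpos)
    (hcont.integrable_of_hasCompactSupport (.of_compactSpace _))
    (hlog.integrable_of_hasCompactSupport (.of_compactSpace _)) n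
  rwa [hcoeff] at h

end FourierSeries

theorem toeplitz_det_ge_exp_integral_log_symbol_general
    (r : ℤ → ℝ) (hsymm : ∀ τ : ℤ, r (-τ) = r τ) (hr : Summable r)
    (hpos : ∀ ω ∈ Set.Icc (0 : ℝ) (2 * π), 0 < ∑' τ : ℤ, r τ * Real.cos (τ * ω)) (n : ℕ) :
    Real.exp ((n / (2 * π)) *
        ∫ ω in (0 : ℝ)..(2 * π), Real.log (∑' τ : ℤ, r τ * Real.cos (τ * ω))) ≤
      (toeplitzMatrix r n).det := by
  have hc : Summable fun k ↦ (r k : ℂ) := Complex.summable_ofReal.2 hr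
  have hcpos (x : AddCircle (2 * π)) : 0 < (fourierSeries (2 * π) (fun k ↦ (r k : ℂ)) x).re := by
    obtain ⟨ω, hω, rfl⟩ := x.eq_coe_Ico
    rw [re_fourierSeries_ofReal_coe hr]
    exact hpos ω (Set.Ico_subset_Icc_self hω)
  have h := exp_mul_integral_log_re_fourierSeries_le_det_toeplitzMatrix hc
    (fun k ↦ by simp [hsymm]) hcpos n
  rw [← Complex.real_le_real]
  simp only [integral_haarAddCircle_eq_smul_intervalIntegral, re_fourierSeries_ofReal_coe hr,
    smul_eq_mul, ← mul_assoc, ← div_eq_mul_inv] at h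
  exact h.trans_eq (map_det_toeplitzMatrix Complex.ofRealHom r n).symm

/-- Szegő-type lower bound on Toeplitz determinants: if `r` is a finitely supported
even autocorrelation sequence whose symbol `S(ω) = Σ_{τ ∈ ℤ} r τ · cos (τ ω)` is
positive on `[0, 2π]`, then for every `n ≥ 1` the `n × n` Toeplitz matrix `T_n(r)`
satisfies `det T_n(r) ≥ exp ((n / (2π)) ∫_0^{2π} log S(ω) dω)`. -/
theorem toeplitz_det_ge_exp_integral_log_symbol
    (r : ℤ → ℝ) (hsymm : ∀ τ : ℤ, r (-τ) = r τ)
    (N : ℕ) (hsupp : ∀ τ : ℤ, (N : ℤ) ≤ |τ| → r τ = 0)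
    (hpos : ∀ ω ∈ Set.Icc (0 : ℝ) (2 * Real.pi),
      0 < ∑' τ : ℤ, r τ * Real.cos ((τ : ℝ) * ω))
    (n : ℕ) (hn : 1 ≤ n) :
    Real.exp (((n : ℝ) / (2 * Real.pi)) *
        ∫ ω in (0 : ℝ)..(2 * Real.pi),
          Real.log (∑' τ : ℤ, r τ * Real.cos ((τ : ℝ) * ω))) ≤
      (Matrix.of fun i j : Fin n => r ((i : ℤ) - (j : ℤ))).det := by
  have hr : Summable r := summable_of_ne_finset_zero (s := Finset.Ioo (-N : ℤ) N) fun τ hτ ↦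
    hsupp τ (by rwa [Finset.mem_Ioo, ← abs_lt, not_lt] at hτ)
  exact toeplitz_det_ge_exp_integral_log_symbol_general r hsymm hr hpos n
end
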